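/- Let m ≥ 1 and s ∈ Sp_{2m}. Then s[iI_m] = iI_m under the symplectic Möbius action if and only if s is an orthogonal matrix (sᵀ s = I_{2m}); i.e., the stabilizer of the base point iI_m in Sp_{2m} is exactly Sp_{2m} ∩ O_{2m}. -/

import Mathlib

open Matrix

/-- Membership in the real symplectic group Sp_{2m}, in block form. -/
def inSp {m : ℕ} (s : Matrix (Fin m ⊕ Fin m) (Fin m ⊕ Fin m) ℝ) : Prop :=
  s.toBlocks₁₁ * s.toBlocks₁₂ᵀ = s.toBlocks₁₂ * s.toBlocks₁₁ᵀ ∧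
  s.toBlocks₂₁ * s.toBlocks₂₂ᵀ = s.toBlocks₂₂ * s.toBlocks₂₁ᵀ ∧
  s.toBlocks₁₁ * s.toBlocks₂₂ᵀ - s.toBlocks₁₂ * s.toBlocks₂₁ᵀ = 1

/-- The symplectic Möbius action s[x] = (a x + b)(c x + d)⁻¹. -/
noncomputable def mobius {m : ℕ} (s : Matrix (Fin m ⊕ Fin m) (Fin m ⊕ Fin m) ℝ)
    (x : Matrix (Fin m) (Fin m) ℂ) : Matrix (Fin m) (Fin m) ℂ :=
  (s.toBlocks₁₁.map ((↑) : ℝ → ℂ) * x + s.toBlocks₁₂.map ((↑) : ℝ → ℂ)) *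
  (s.toBlocks₂₁.map ((↑) : ℝ → ℂ) * x + s.toBlocks₂₂.map ((↑) : ℝ → ℂ))⁻¹

/-! Write `q = ax + b` and `p = cx + d`, so that `s` sends the column `(x, 1)` to `(q, p)`. Since
`s` preserves the Hermitian form of `iJ`, the matrices `pᴴq` and `x` have the same imaginary part;
it is positive definite on the Siegel space, which forces `p` to be invertible. Hence `s[i] = i`
means `ai + b = i(ci + d)`, that is `a = d` and `b = -c`, which says that `s` commutes with `J`.
Because `s J sᵀ = J`, commuting with `J` is in turn the same as `s sᵀ = 1`. -/

open scoped ComplexOrder ComplexStarModule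

section

variable {n R : Type*} [Fintype n] [DecidableEq n] [CommRing R]

theorem commute_J_iff {A : Matrix (n ⊕ n) (n ⊕ n) R} :
    Commute A (J n R) ↔ A.toBlocks₁₁ = A.toBlocks₂₂ ∧ A.toBlocks₁₂ = -A.toBlocks₂₁ := by
  obtain ⟨a, b, c, d, rfl⟩ : ∃ a b c d, A = fromBlocks a b c d :=
    ⟨_, _, _, _, (fromBlocks_toBlocks A).symm⟩
  simp only [commute_iff_eq, J, fromBlocks_multiply, fromBlocks_inj, toBlocks_fromBlocks₁₁,
    toBlocks_fromBlocks₁₂, toBlocks_fromBlocks₂₁, toBlocks_fromBlocks₂₂, mul_zero, zero_mul,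
    mul_one, one_mul, mul_neg, neg_mul, zero_add, add_zero, neg_inj]
  grind

theorem transpose_mul_self_eq_one_iff_commute_J {A : Matrix (n ⊕ n) (n ⊕ n) R}
    (hA : A ∈ symplecticGroup n R) : Aᵀ * A = 1 ↔ Commute A (J n R) := by
  rw [SymplecticGroup.mem_iff] at hA
  constructor
  · intro h
    calc A * J n R = A * J n R * (Aᵀ * A) := by rw [h, mul_one]
      _ = J n R * A := by rw [← mul_assoc, hA]
  · intro h
    have hJ : IsUnit (J n R) := (isUnit_iff_isUnit_det _).mpr (isUnit_det_J n R)
    rw [mul_eq_one_comm]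
    refine hJ.mul_left_cancel ?_
    rw [← mul_assoc, ← h.eq, hA, mul_one]

theorem conjTranspose_fromRows_mul_J_mul_fromRows [StarRing R] (q p : Matrix n n R) :
    (fromRows q p)ᴴ * J n R * fromRows q p = pᴴ * q - qᴴ * p := by
  rw [conjTranspose_fromRows_eq_fromCols_conjTranspose, J, fromCols_mul_fromBlocks,
    fromCols_mul_fromRows]
  simp [sub_eq_add_neg]

end

section

variable {n : Type*} [Fintype n] [DecidableEq n]

/-- The numerator `a x + b` of the symplectic Möbius action. Together with `mobiusDenom` it gives
the homogeneous coordinates of `mobius A x`, here over any finite index type. -/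
noncomputable def mobiusNum (A : Matrix (n ⊕ n) (n ⊕ n) ℝ) (x : Matrix n n ℂ) : Matrix n n ℂ :=
  A.toBlocks₁₁.map (↑) * x + A.toBlocks₁₂.map (↑)

/-- The denominator `c x + d` of the symplectic Möbius action, also known as its factor of
automorphy; `mobius A x` is only meaningful where this matrix is invertible. -/
noncomputable def mobiusDenom (A : Matrix (n ⊕ n) (n ⊕ n) ℝ) (x : Matrix n n ℂ) : Matrix n n ℂ :=
  A.toBlocks₂₁.map (↑) * x + A.toBlocks₂₂.map (↑)

theorem map_ofReal_mul_fromRows_one (A : Matrix (n ⊕ n) (n ⊕ n) ℝ) (x : Matrix n n ℂ) :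
    A.map Complex.ofRealHom * fromRows x (1 : Matrix n n ℂ) =
      fromRows (mobiusNum A x) (mobiusDenom A x) := by
  conv_lhs => rw [← fromBlocks_toBlocks A, fromBlocks_map, fromBlocks_mul_fromRows]
  simp only [mul_one, mobiusNum, mobiusDenom]
  rfl

theorem conjTranspose_map_ofReal_mul_J_mul_map_ofReal {A : Matrix (n ⊕ n) (n ⊕ n) ℝ}
    (hA : A ∈ symplecticGroup n ℝ) :
    (A.map Complex.ofRealHom)ᴴ * J n ℂ * A.map Complex.ofRealHom = J n ℂ := by
  have hreal : (A.map Complex.ofRealHom)ᴴ = (A.map Complex.ofRealHom)ᵀ := by ext; simp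
  rw [hreal]
  exact SymplecticGroup.mem_iff'.mp (SymplecticGroup.map_mem hA Complex.ofRealHom)

theorem conjTranspose_mobiusDenom_mul_mobiusNum_sub_conjTranspose {A : Matrix (n ⊕ n) (n ⊕ n) ℝ}
    (hA : A ∈ symplecticGroup n ℝ) (x : Matrix n n ℂ) :
    (mobiusDenom A x)ᴴ * mobiusNum A x - (mobiusNum A x)ᴴ * mobiusDenom A x = x - xᴴ := by
  have hx := conjTranspose_fromRows_mul_J_mul_fromRows x (1 : Matrix n n ℂ)
  rw [conjTranspose_one, Matrix.one_mul, Matrix.mul_one] at hx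
  rw [← hx, ← conjTranspose_map_ofReal_mul_J_mul_map_ofReal hA,
    ← conjTranspose_fromRows_mul_J_mul_fromRows, ← map_ofReal_mul_fromRows_one, conjTranspose_mul]
  simp only [Matrix.mul_assoc]

theorem imaginaryPart_conjTranspose_mobiusDenom_mul_mobiusNum {A : Matrix (n ⊕ n) (n ⊕ n) ℝ}
    (hA : A ∈ symplecticGroup n ℝ) (x : Matrix n n ℂ) :
    ℑ ((mobiusDenom A x)ᴴ * mobiusNum A x) = ℑ x := by
  ext1
  rw [imaginaryPart_apply_coe, imaginaryPart_apply_coe, star_eq_conjTranspose,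
    star_eq_conjTranspose, conjTranspose_mul, conjTranspose_conjTranspose,
    conjTranspose_mobiusDenom_mul_mobiusNum_sub_conjTranspose hA]

theorem isUnit_of_posDef_imaginaryPart_conjTranspose_mul {p q : Matrix n n ℂ}
    (h : (ℑ (pᴴ * q) : Matrix n n ℂ).PosDef) : IsUnit p := by
  rw [isUnit_iff_isUnit_det, isUnit_iff_ne_zero]
  intro hp
  obtain ⟨v, hv, hpv⟩ := exists_mulVec_eq_zero_iff.mpr hp
  refine (h.dotProduct_mulVec_pos hv).ne' ?_
  have hvp : star v ᵥ* pᴴ = 0 := by rw [← star_mulVec, hpv, star_zero]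
  have hform : star v ⬝ᵥ ((pᴴ * q - qᴴ * p) *ᵥ v) = 0 := by
    rw [sub_mulVec, ← mulVec_mulVec, ← mulVec_mulVec, hpv, mulVec_zero, sub_zero,
      dotProduct_mulVec, hvp, zero_dotProduct]
  rw [imaginaryPart_apply_coe, star_eq_conjTranspose, conjTranspose_mul,
    conjTranspose_conjTranspose, smul_mulVec, smul_mulVec, dotProduct_smul, dotProduct_smul, hform,
    smul_zero, smul_zero]

/-- For symmetric `x = u + iv` the self-adjoint matrix `ℑ x` is `v`, so the hypothesis on `x` holds
throughout the Siegel upper half space. -/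
theorem isUnit_mobiusDenom {A : Matrix (n ⊕ n) (n ⊕ n) ℝ} (hA : A ∈ symplecticGroup n ℝ)
    {x : Matrix n n ℂ} (hx : (ℑ x : Matrix n n ℂ).PosDef) : IsUnit (mobiusDenom A x) :=
  isUnit_of_posDef_imaginaryPart_conjTranspose_mul (q := mobiusNum A x) <| by
    rwa [imaginaryPart_conjTranspose_mobiusDenom_mul_mobiusNum hA]

theorem mobiusNum_I_eq_I_mul_mobiusDenom_I_iff_commute_J {A : Matrix (n ⊕ n) (n ⊕ n) ℝ} :
    mobiusNum A (Complex.I • 1) = Complex.I • 1 * mobiusDenom A (Complex.I • 1) ↔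
      Commute A (J n ℝ) := by
  rw [commute_J_iff, and_comm]
  simp only [← Matrix.ext_iff]
  simp [mobiusNum, mobiusDenom, Complex.ext_iff, forall_and]

end

theorem posDef_imaginaryPart_I_smul_one {n : Type*} [DecidableEq n] :
    (ℑ (Complex.I • (1 : Matrix n n ℂ)) : Matrix n n ℂ).PosDef := by
  rw [imaginaryPart_I_smul, isHermitian_one.isSelfAdjoint.coe_realPart]
  exact PosDef.one

theorem inSp_iff_mem_symplecticGroup {m : ℕ} {s : Matrix (Fin m ⊕ Fin m) (Fin m ⊕ Fin m) ℝ} :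
    inSp s ↔ s ∈ symplecticGroup (Fin m) ℝ := by
  rw [← SymplecticGroup.transpose_mem_iff, ← fromBlocks_toBlocks s, fromBlocks_transpose,
    SymplecticGroup.fromBlocks_mem_iff]
  simp [inSp]

theorem mobius_eq_iff {m : ℕ} {s : Matrix (Fin m ⊕ Fin m) (Fin m ⊕ Fin m) ℝ} (hs : inSp s)
    {x y : Matrix (Fin m) (Fin m) ℂ} (hx : (ℑ x : Matrix (Fin m) (Fin m) ℂ).PosDef) :
    mobius s x = y ↔ mobiusNum s x = y * mobiusDenom s x := by
  have := (isUnit_mobiusDenom (inSp_iff_mem_symplecticGroup.mp hs) hx).invertible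
  exact mul_inv_eq_iff_eq_mul_of_invertible (mobiusDenom s x) (mobiusNum s x) y

/-- for s ∈ Sp_{2m}, s fixes the base point iI_m under the Möbius
action iff s is orthogonal; i.e. the stabilizer of iI_m is Sp_{2m} ∩ O_{2m}. -/
theorem stabilizer_of_basepoint (m : ℕ) (hm : 1 ≤ m)
    (s : Matrix (Fin m ⊕ Fin m) (Fin m ⊕ Fin m) ℝ) (hs : inSp s) :
    mobius s (Complex.I • (1 : Matrix (Fin m) (Fin m) ℂ))
        = Complex.I • (1 : Matrix (Fin m) (Fin m) ℂ) ↔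
      sᵀ * s = 1 := by
  rw [mobius_eq_iff hs posDef_imaginaryPart_I_smul_one,
    mobiusNum_I_eq_I_mul_mobiusDenom_I_iff_commute_J,
    ← transpose_mul_self_eq_one_iff_commute_J (inSp_iff_mem_symplecticGroup.mp hs)]
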